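/- Let x₀ ∈ I with x₀ < sup I, and let f, g, h : I → ℝ be continuous and strictly monotone. Suppose f and g are right-differentiable at x₀ with f'₊(x₀) = 0 and g'₊(x₀) = 0, and that A^[f] ≤ A^[h] ≤ A^[g]. Then h is right-differentiable at x₀ and h'₊(x₀) = 0. (The analogous statement holds for left-sided derivatives at a point x₀ > inf I.) -/

import Mathlib

/-!
A quasi-arithmetic mean does not change when its generator is negated, so `f` and `h` may be taken
increasing. Then `A^[f] ≤ A^[h]` says that `f x ≤ (f a₁ + ⋯ + f aₙ) / n` implies
`h x ≤ (h a₁ + ⋯ + h aₙ) / n`. On the vector `(y, x₀, …, x₀)` this reads: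
`n * (f x - f x₀) ≤ f y - f x₀` implies `n * (h x - h x₀) ≤ h y - h x₀`. For `x₀ < x ≤ y`, taking
the largest such `n` yields `(h x - h x₀) * (f y - f x₀) ≤ 2 * (h y - h x₀) * (f x - f x₀)`, which
is the slope inequality for the convex function `h ∘ f⁻¹`, with a constant `2` that spares a limit
over rational weights. Hence `h x - h x₀ = O(f x - f x₀)` as `x → x₀⁺`, and a vanishing right
derivative passes from `f` to `h`.
-/

open Set Function Filter

/-- The quasi-arithmetic mean generated by `f` on the interval `I`,
applied to a vector `a ∈ Iⁿ`: `f⁻¹((f a₁ + ⋯ + f aₙ)/n)`, where the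
inverse of `f` is taken on `I`. -/
noncomputable def qam (I : Set ℝ) (f : ℝ → ℝ) {n : ℕ} (a : Fin n → ℝ) : ℝ :=
  Function.invFunOn f I ((∑ i, f (a i)) / n)

/-- The natural (pointwise) partial order on quasi-arithmetic means:
`A^[f] ≤ A^[g]` iff `A^[f](a) ≤ A^[g](a)` for every `n ≥ 1` and every `a ∈ Iⁿ`. -/
def qamLE (I : Set ℝ) (f g : ℝ → ℝ) : Prop :=
  ∀ n : ℕ, 1 ≤ n → ∀ a : Fin n → ℝ, (∀ i, a i ∈ I) → qam I f a ≤ qam I g a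

/-- `A^[f] = A^[g]` : equality of the two quasi-arithmetic means as means. -/
def qamEQ (I : Set ℝ) (f g : ℝ → ℝ) : Prop :=
  ∀ n : ℕ, 1 ≤ n → ∀ a : Fin n → ℝ, (∀ i, a i ∈ I) → qam I f a = qam I g a

/-- `f` is strictly monotone on `I` (strictly increasing or strictly decreasing). -/
def StrictMonoOrAntiOn (f : ℝ → ℝ) (I : Set ℝ) : Prop :=
  StrictMonoOn f I ∨ StrictAntiOn f I

open Asymptotics Topology

lemma exists_nat_mul_le_and_le_two_mul {K : Type*} [Field K] [LinearOrder K]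
    [IsStrictOrderedRing K] [FloorSemiring K] {d D : K} (hd : 0 < d) (hdD : d ≤ D) :
    ∃ n : ℕ, n ≠ 0 ∧ n * d ≤ D ∧ D ≤ 2 * (n * d) := by
  have hpos : 1 ≤ ⌊D / d⌋₊ := Nat.floor_pos.2 ((one_le_div hd).2 hdD)
  have hle : ⌊D / d⌋₊ * d ≤ D :=
    (le_div_iff₀ hd).1 (Nat.floor_le (div_nonneg (hd.le.trans hdD) hd.le))
  have hlt : D < (⌊D / d⌋₊ + 1) * d := (div_lt_iff₀ hd).1 (Nat.lt_floor_add_one _)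
  have hdle : d ≤ ⌊D / d⌋₊ * d := le_mul_of_one_le_left hd.le (by exact_mod_cast hpos)
  exact ⟨⌊D / d⌋₊, by lia, hle, by linarith⟩

lemma sum_comp_finCons_const {α R : Type*} [Semiring R] (k : α → R) (y z : α) (m : ℕ) :
    ∑ i, k ((Fin.cons y fun _ ↦ z : Fin (m + 1) → α) i) = k y + m * k z := by
  simp [Fin.sum_univ_succ]

lemma invFunOn_comp_of_injective {α β γ : Type*} [Nonempty α] {e : β → γ} (he : e.Injective)
    (f : α → β) (s : Set α) (b : β) : invFunOn (e ∘ f) s (e b) = invFunOn f s b := by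
  -- Both sides choose from the same predicate, so the junk values off the image of `s` agree as well.
  unfold invFunOn
  congr! <;> simp [he.eq_iff]

lemma average_mem_image_of_isPreconnected {X : Type*} [TopologicalSpace X] {s : Set X}
    (hs : IsPreconnected s) {f : X → ℝ} (hf : ContinuousOn f s) {n : ℕ} (hn : n ≠ 0)
    {a : Fin n → X} (ha : ∀ i, a i ∈ s) : (∑ i, f (a i)) / n ∈ f '' s := by
  have hconvex : Convex ℝ (f '' s) := (hs.image f hf).ordConnected.convex
  rw [Finset.sum_div]
  simp only [div_eq_inv_mul]
  exact hconvex.sum_mem (fun _ _ ↦ by positivity) (by simp [hn])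
    fun i _ ↦ mem_image_of_mem f (ha i)

section Mean

variable {I : Set ℝ} {f h : ℝ → ℝ}

lemma qam_neg {n : ℕ} (a : Fin n → ℝ) : qam I (-f) a = qam I f a := by
  simp only [qam, Pi.neg_apply, Finset.sum_neg_distrib, neg_div]
  exact invFunOn_comp_of_injective neg_injective f I _

lemma qamLE_neg_left : qamLE I (-f) h ↔ qamLE I f h := by
  simp only [qamLE, qam_neg]

lemma qamLE_neg_right : qamLE I f (-h) ↔ qamLE I f h := by
  simp only [qamLE, qam_neg]

lemma qam_mem (hI : I.OrdConnected) (hf : ContinuousOn f I) {n : ℕ} (hn : n ≠ 0)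
    {a : Fin n → ℝ} (ha : ∀ i, a i ∈ I) : qam I f a ∈ I :=
  invFunOn_mem (average_mem_image_of_isPreconnected hI.isPreconnected hf hn ha)

lemma apply_qam (hI : I.OrdConnected) (hf : ContinuousOn f I) {n : ℕ} (hn : n ≠ 0)
    {a : Fin n → ℝ} (ha : ∀ i, a i ∈ I) : f (qam I f a) = (∑ i, f (a i)) / n :=
  invFunOn_eq (average_mem_image_of_isPreconnected hI.isPreconnected hf hn ha)

lemma le_average_of_qamLE (hI : I.OrdConnected) (hfc : ContinuousOn f I) (hhc : ContinuousOn h I)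
    (hf : StrictMonoOn f I) (hh : MonotoneOn h I) (hle : qamLE I f h) {n : ℕ} (hn : n ≠ 0)
    {a : Fin n → ℝ} (ha : ∀ i, a i ∈ I) {x : ℝ} (hx : x ∈ I) (hfx : f x ≤ (∑ i, f (a i)) / n) :
    h x ≤ (∑ i, h (a i)) / n := by
  rw [← apply_qam hI hfc hn ha, hf.le_iff_le hx (qam_mem hI hfc hn ha)] at hfx
  rw [← apply_qam hI hhc hn ha]
  exact hh hx (qam_mem hI hhc hn ha) (hfx.trans (hle n (Nat.one_le_iff_ne_zero.2 hn) a ha))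

lemma nat_mul_sub_le_of_qamLE (hI : I.OrdConnected) (hfc : ContinuousOn f I)
    (hhc : ContinuousOn h I) (hf : StrictMonoOn f I) (hh : MonotoneOn h I) (hle : qamLE I f h)
    {x y z : ℝ} (hx : x ∈ I) (hy : y ∈ I) (hz : z ∈ I) {n : ℕ} (hn : n ≠ 0)
    (hfx : n * (f x - f z) ≤ f y - f z) : n * (h x - h z) ≤ h y - h z := by
  obtain ⟨m, rfl⟩ := Nat.exists_eq_succ_of_ne_zero hn
  have hmem : ∀ i, (Fin.cons y fun _ ↦ z : Fin (m + 1) → ℝ) i ∈ I :=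
    Fin.cases hy fun _ ↦ hz
  have hmean := le_average_of_qamLE hI hfc hhc hf hh hle hn hmem hx
  rw [sum_comp_finCons_const, sum_comp_finCons_const, le_div_iff₀ (by positivity),
    le_div_iff₀ (by positivity)] at hmean
  push_cast at hmean hfx ⊢
  linarith [hmean (by linarith)]

lemma sub_mul_sub_le_of_qamLE (hI : I.OrdConnected) (hfc : ContinuousOn f I)
    (hhc : ContinuousOn h I) (hf : StrictMonoOn f I) (hh : MonotoneOn h I) (hle : qamLE I f h)
    {x y z : ℝ} (hz : z ∈ I) (hy : y ∈ I) (hx : x ∈ Ioc z y) :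
    (h x - h z) * (f y - f z) ≤ 2 * (h y - h z) * (f x - f z) := by
  have hxI : x ∈ I := hI.out hz hy (Ioc_subset_Icc_self hx)
  have hfzx : 0 < f x - f z := sub_pos.2 (hf hz hxI hx.1)
  have hfxy : f x - f z ≤ f y - f z := sub_le_sub_right (hf.monotoneOn hxI hy hx.2) _
  have hhzx : 0 ≤ h x - h z := sub_nonneg.2 (hh hz hxI hx.1.le)
  obtain ⟨n, hn, hnle, hlen⟩ := exists_nat_mul_le_and_le_two_mul hfzx hfxy
  have hslope := nat_mul_sub_le_of_qamLE hI hfc hhc hf hh hle hxI hy hz hn hnle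
  calc (h x - h z) * (f y - f z)
      ≤ (h x - h z) * (2 * (n * (f x - f z))) := by gcongr
    _ = 2 * (n * (h x - h z)) * (f x - f z) := by ring
    _ ≤ 2 * (h y - h z) * (f x - f z) := by gcongr

lemma isBigO_sub_of_qamLE_of_monotoneOn (hI : I.OrdConnected) (hfc : ContinuousOn f I)
    (hhc : ContinuousOn h I) (hf : StrictMonoOn f I) (hh : MonotoneOn h I) (hle : qamLE I f h)
    {y z : ℝ} (hz : z ∈ I) (hy : y ∈ I) (hzy : z < y) :
    (fun x ↦ h x - h z) =O[𝓝[>] z] fun x ↦ f x - f z := by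
  refine .of_bound (2 * (h y - h z) / (f y - f z)) ?_
  filter_upwards [Ioc_mem_nhdsGT hzy] with x hx
  have hxI : x ∈ I := hI.out hz hy (Ioc_subset_Icc_self hx)
  rw [Real.norm_of_nonneg (sub_nonneg.2 (hh hz hxI hx.1.le)),
    Real.norm_of_nonneg (sub_nonneg.2 (hf hz hxI hx.1).le), div_mul_eq_mul_div,
    le_div_iff₀ (sub_pos.2 (hf hz hy hzy))]
  exact sub_mul_sub_le_of_qamLE hI hfc hhc hf hh hle hz hy hx

lemma isBigO_sub_of_qamLE (hI : I.OrdConnected) (hfc : ContinuousOn f I)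
    (hhc : ContinuousOn h I) (hf : StrictMonoOrAntiOn f I) (hh : MonotoneOn h I ∨ AntitoneOn h I)
    (hle : qamLE I f h) {y z : ℝ} (hz : z ∈ I) (hy : y ∈ I) (hzy : z < y) :
    (fun x ↦ h x - h z) =O[𝓝[>] z] fun x ↦ f x - f z := by
  have sub_neg_apply (k : ℝ → ℝ) : (fun x ↦ (-k) x - (-k) z) = fun x ↦ -(k x - k z) := by
    simp only [Pi.neg_apply, neg_sub, neg_sub_neg]
  wlog hf_mono : StrictMonoOn f I generalizing f
  · have hf_neg := (hf.resolve_left hf_mono).neg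
    have hO := this hfc.neg (.inl hf_neg) (qamLE_neg_left.2 hle) hf_neg
    rwa [sub_neg_apply, isBigO_neg_right] at hO
  wlog hh_mono : MonotoneOn h I generalizing h
  · have hh_neg := (hh.resolve_left hh_mono).neg
    have hO := this hhc.neg (.inl hh_neg) (qamLE_neg_right.2 hle) hh_neg
    rwa [sub_neg_apply, isBigO_neg_left] at hO
  exact isBigO_sub_of_qamLE_of_monotoneOn hI hfc hhc hf_mono hh_mono hle hz hy hzy

end Mean

lemma hasDerivWithinAt_zero_of_isBigO_sub {𝕜 E F : Type*} [NontriviallyNormedField 𝕜]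
    [NormedAddCommGroup E] [NormedSpace 𝕜 E] [NormedAddCommGroup F] [NormedSpace 𝕜 F]
    {f : 𝕜 → E} {h : 𝕜 → F} {s : Set 𝕜} {z : 𝕜} (hf : HasDerivWithinAt f 0 s z)
    (hfh : (fun x ↦ h x - h z) =O[𝓝[s] z] fun x ↦ f x - f z) : HasDerivWithinAt h 0 s z := by
  rw [hasDerivWithinAt_iff_isLittleO] at hf ⊢
  simp only [smul_zero, sub_zero] at hf ⊢
  exact hfh.trans_isLittleO hf

theorem right_deriv_zero_interval_type_general
    {I : Set ℝ} (hI : I.OrdConnected) {x₀ : ℝ} (hx₀ : x₀ ∈ I) (hx₀sup : ∃ y ∈ I, x₀ < y)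
    {f h : ℝ → ℝ} (hfc : ContinuousOn f I) (hhc : ContinuousOn h I)
    (hfm : StrictMonoOrAntiOn f I) (hhm : StrictMonoOrAntiOn h I)
    (hfd : HasDerivWithinAt f 0 (Ioi x₀) x₀) (hle : qamLE I f h) :
    HasDerivWithinAt h 0 (Ioi x₀) x₀ := by
  obtain ⟨y, hy, hxy⟩ := hx₀sup
  have hO : (fun x ↦ h x - h x₀) =O[𝓝[>] x₀] fun x ↦ f x - f x₀ :=
    isBigO_sub_of_qamLE hI hfc hhc hfm (hhm.imp (·.monotoneOn) (·.antitoneOn)) hle hx₀ hy hxy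
  exact hasDerivWithinAt_zero_of_isBigO_sub hfd hO

/-- Corollary 1: if `f, g` are right-differentiable at `x₀` with
vanishing right derivative and `A^[f] ≤ A^[h] ≤ A^[g]`, then `h` is
right-differentiable at `x₀` with `h'₊(x₀) = 0`. -/
theorem right_deriv_zero_interval_type
    (I : Set ℝ) (hI : I.OrdConnected) (hInontriv : ∃ x ∈ I, ∃ y ∈ I, x < y)
    (x₀ : ℝ) (hx₀ : x₀ ∈ I) (hx₀sup : ∃ y ∈ I, x₀ < y)
    (f g h : ℝ → ℝ)
    (hfc : ContinuousOn f I) (hgc : ContinuousOn g I) (hhc : ContinuousOn h I)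
    (hfm : StrictMonoOrAntiOn f I) (hgm : StrictMonoOrAntiOn g I)
    (hhm : StrictMonoOrAntiOn h I)
    (hfd : HasDerivWithinAt f 0 (Ioi x₀) x₀)
    (hgd : HasDerivWithinAt g 0 (Ioi x₀) x₀)
    (hle₁ : qamLE I f h) (hle₂ : qamLE I h g) :
    HasDerivWithinAt h 0 (Ioi x₀) x₀ :=
  right_deriv_zero_interval_type_general hI hx₀ hx₀sup hfc hhc hfm hhm hfd hle₁
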